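/- (Qubit two-sample universal test.) Let ρ and σ be density matrices on ℂ². With m = 3n_1 and n = 3n_2, construct σ̂_m = (1/2)·(I₂ + Σ_K r̂_K σ_K) from n_1 i.i.d. [−1,1]-valued samples per Pauli axis with means Tr[σ_K σ], and ρ̂_n = (1/2)·(I₂ + Σ_K ŝ_K σ_K) from n_2 i.i.d. [−1,1]-valued samples per Pauli axis with means Tr[σ_K ρ], all samples mutually independent. Let k = min{m, n}, let α ∈ (0,1), set c = √(216·ln(12/α)/k), and accept H₀ iff ‖σ̂_m − ρ̂_n‖₁ ≤ c. Then: (i) if σ = ρ, the probability of rejecting H₀ is at most α; and (ii) if σ ≠ ρ and c < ‖ρ − σ‖₁, the probability of accepting H₀ is at most 12·exp(−k·(‖ρ − σ‖₁ − c)²/216). -/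

import Mathlib

open Matrix MeasureTheory ProbabilityTheory
open scoped ComplexOrder

/-- The positive semidefinite square root of a matrix (junk value `0` if the matrix is not
positive semidefinite). -/
noncomputable def matSqrt {d : ℕ} (A : Matrix (Fin d) (Fin d) ℂ) : Matrix (Fin d) (Fin d) ℂ :=
  open scoped Classical in
  if h : A.PosSemidef then
    (h.1.eigenvectorUnitary : Matrix (Fin d) (Fin d) ℂ) *
      diagonal ((RCLike.ofReal : ℝ → ℂ) ∘ Real.sqrt ∘ h.1.eigenvalues) *
      (star h.1.eigenvectorUnitary : Matrix (Fin d) (Fin d) ℂ)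
  else 0

/-- The trace norm `‖A‖₁ = Tr[√(A†A)]`. -/
noncomputable def traceNorm {d : ℕ} (A : Matrix (Fin d) (Fin d) ℂ) : ℝ :=
  (matSqrt (Aᴴ * A)).trace.re

/-- The three Pauli matrices `σ_X, σ_Y, σ_Z`. -/
noncomputable def pauli : Fin 3 → Matrix (Fin 2) (Fin 2) ℂ :=
  ![!![0, 1; 1, 0], !![0, -Complex.I; Complex.I, 0], !![1, 0; 0, -1]]

/-- A nonnegative scalar matrix has the obvious square root. -/
lemma matSqrt_smul_one {d : ℕ} {a : ℝ} (ha : 0 ≤ a) :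
    matSqrt ((a : ℂ) • (1 : Matrix (Fin d) (Fin d) ℂ)) = ((√a : ℝ) : ℂ) • 1 := by
  have h : ((a : ℂ) • (1 : Matrix (Fin d) (Fin d) ℂ)).PosSemidef :=
    PosSemidef.one.smul (by exact_mod_cast ha)
  have hev : ∀ i, h.1.eigenvalues i = a := fun i => by
    have hnorm := h.1.eigenvectorBasis.orthonormal.1 i
    rw [h.1.eigenvalues_eq, smul_mulVec, one_mulVec, dotProduct_smul, dotProduct_comm,
      ← EuclideanSpace.inner_eq_star_dotProduct, inner_self_eq_norm_sq_to_K, hnorm]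
    simp
  have hdiag : diagonal ((RCLike.ofReal : ℝ → ℂ) ∘ Real.sqrt ∘ h.1.eigenvalues) =
      ((√a : ℝ) : ℂ) • (1 : Matrix (Fin d) (Fin d) ℂ) := by
    ext i j
    by_cases hij : i = j <;> simp [one_apply, hij, hev]
  rw [matSqrt, dif_pos h, hdiag, mul_smul_comm, mul_one, smul_mul_assoc,
    Unitary.mul_star_self_of_mem h.1.eigenvectorUnitary.2]

/-- The trace norm of a traceless Hermitian qubit operator is the Euclidean norm of its
Bloch vector. -/
lemma traceNorm_half_smul_sum_pauli (t : EuclideanSpace ℝ (Fin 3)) :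
    traceNorm ((1 / 2 : ℂ) • ∑ K, (t K : ℂ) • pauli K) = ‖t‖ := by
  have hsq : ((1 / 2 : ℂ) • ∑ K, (t K : ℂ) • pauli K)ᴴ * ((1 / 2 : ℂ) • ∑ K, (t K : ℂ) • pauli K)
      = (((‖t‖ / 2) ^ 2 : ℝ) : ℂ) • 1 := by
    have htwo : (starRingEnd ℂ) 2 = 2 := map_ofNat _ 2
    rw [div_pow, EuclideanSpace.real_norm_sq_eq]
    ext i j
    fin_cases i <;> fin_cases j <;>
      simp [pauli, Fin.sum_univ_three, Matrix.mul_apply, Fin.sum_univ_two, htwo] <;>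
      ring_nf <;> simp <;> ring
  rw [traceNorm, hsq, matSqrt_smul_one (sq_nonneg _), Real.sqrt_sq (by positivity)]
  simp

/-- Bloch representation of a qubit state. -/
lemma bloch_expansion {ρ : Matrix (Fin 2) (Fin 2) ℂ} (hρ : ρ.IsHermitian) (htr : ρ.trace = 1) :
    ρ = (1 / 2 : ℂ) • (1 + ∑ K, (((pauli K * ρ).trace.re : ℝ) : ℂ) • pauli K) := by
  have h01 := hρ.apply 0 1
  have h00 := hρ.apply 0 0
  have h11 := hρ.apply 1 1
  rw [trace_fin_two] at htr
  simp only [Complex.ext_iff, Complex.star_def, Complex.conj_re, Complex.conj_im, Complex.add_re,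
    Complex.add_im, Complex.one_re, Complex.one_im] at h01 h00 h11 htr
  ext i j
  fin_cases i <;> fin_cases j <;>
    simp [pauli, Fin.sum_univ_three, Matrix.mul_apply, Fin.sum_univ_two, trace_fin_two,
      Complex.ext_iff] <;>
    constructor <;> linarith

/-- **Hoeffding's inequality**, two-sided, for the empirical mean of independent
`[-1, 1]`-valued random variables with a common mean. -/
lemma measure_abs_empirical_mean_sub_ge_le {Ω : Type*} [MeasurableSpace Ω] {μ : Measure Ω}
    [IsProbabilityMeasure μ] {N : ℕ} (hN : 1 ≤ N) {Z : Fin N → Ω → ℝ}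
    (hmeas : ∀ i, Measurable (Z i)) (hbdd : ∀ i ω, Z i ω ∈ Set.Icc (-1 : ℝ) 1) {p : ℝ}
    (hmean : ∀ i, ∫ ω, Z i ω ∂μ = p) (hindep : iIndepFun Z μ) {δ : ℝ} (hδ : 0 ≤ δ) :
    μ {ω | δ ≤ |(1 / N : ℝ) * ∑ i, Z i ω - p|} ≤
      ENNReal.ofReal (2 * Real.exp (-(N : ℝ) * δ ^ 2 / 2)) := by
  have hN0 : (0 : ℝ) < N := by exact_mod_cast hN
  have hsub : ∀ i, HasSubgaussianMGF (fun ω => Z i ω - p) 1 μ := fun i => by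
    have h := hasSubgaussianMGF_of_mem_Icc (hmeas i).aemeasurable
      (Filter.Eventually.of_forall (f := ae μ) (hbdd i))
    rw [hmean i] at h
    convert h using 1
    ext
    norm_num
  have htail : ∀ s : ℝ, (∀ i, HasSubgaussianMGF (fun ω => s * (Z i ω - p)) 1 μ) →
      μ.real {ω | N * δ ≤ ∑ i, s * (Z i ω - p)} ≤ Real.exp (-(N : ℝ) * δ ^ 2 / 2) := by
    intro s hs
    have hind : iIndepFun (fun i ω => s * (Z i ω - p)) μ :=
      hindep.comp (fun _ x => s * (x - p)) (fun _ => by fun_prop)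
    refine (HasSubgaussianMGF.measure_sum_ge_le_of_iIndepFun hind (s := Finset.univ)
      (c := fun _ => 1) (fun i _ => hs i) (by positivity)).trans (le_of_eq ?_)
    congr 1
    simp only [Finset.sum_const, Finset.card_univ, Fintype.card_fin, nsmul_eq_mul, mul_one,
      NNReal.coe_natCast]
    field_simp
  have hup := htail 1 fun i => by simpa using hsub i
  have hlo := htail (-1) fun i => by
    convert (hsub i).neg using 1
    funext ω
    simp
  rw [← ofReal_measureReal]
  refine ENNReal.ofReal_le_ofReal ?_
  refine (measureReal_mono (s₂ := {ω | N * δ ≤ ∑ i, 1 * (Z i ω - p)} ∪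
    {ω | N * δ ≤ ∑ i, (-1) * (Z i ω - p)}) ?_).trans ((measureReal_union_le _ _).trans ?_)
  · intro ω hω
    have hsum : ∑ i, (Z i ω - p) = N * ((1 / N : ℝ) * ∑ i, Z i ω - p) := by
      simp only [Finset.sum_sub_distrib, Finset.sum_const, Finset.card_univ, Fintype.card_fin,
        nsmul_eq_mul]
      field_simp
    simp only [Set.mem_union, Set.mem_ofPred_eq, ← Finset.mul_sum, hsum] at hω ⊢
    rcases le_abs.1 hω with h | h
    · left
      rw [one_mul]
      gcongr
    · right
      rw [neg_one_mul, ← mul_neg]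
      gcongr
  · linarith

/-- The Euclidean norm is bounded by the sum of the absolute values of the coordinates. -/
lemma EuclideanSpace.norm_le_sum_abs {ι : Type*} [Fintype ι] [DecidableEq ι]
    (t : EuclideanSpace ℝ ι) : ‖t‖ ≤ ∑ i, |t i| := by
  have h : t = ∑ i, EuclideanSpace.single i (t i) := by
    ext j
    simp [Finset.sum_apply]
  calc ‖t‖ = ‖∑ i, EuclideanSpace.single i (t i)‖ := by rw [← h]
    _ ≤ ∑ i, ‖EuclideanSpace.single i (t i)‖ := norm_sum_le _ _
    _ = ∑ i, |t i| := by simp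

/-- Concentration of the difference of two estimated Bloch vectors, from concentration of each
coordinate. -/
lemma measure_norm_sub_sub_ge_le {Ω : Type*} [MeasurableSpace Ω] {μ : Measure Ω}
    {rhat shat : Ω → EuclideanSpace ℝ (Fin 3)} {r s : EuclideanSpace ℝ (Fin 3)} {ε b : ℝ}
    (hb : 0 ≤ b)
    (hr : ∀ K, μ {ω | ε / 6 ≤ |rhat ω K - r K|} ≤ ENNReal.ofReal (2 * b))
    (hs : ∀ K, μ {ω | ε / 6 ≤ |shat ω K - s K|} ≤ ENNReal.ofReal (2 * b)) :
    μ {ω | ε ≤ ‖(rhat ω - shat ω) - (r - s)‖} ≤ ENNReal.ofReal (12 * b) := by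
  have hsubset : {ω | ε ≤ ‖(rhat ω - shat ω) - (r - s)‖} ⊆
      ⋃ K, ({ω | ε / 6 ≤ |rhat ω K - r K|} ∪ {ω | ε / 6 ≤ |shat ω K - s K|}) := by
    intro ω hω
    by_contra hcon
    simp only [Set.mem_iUnion, Set.mem_union, Set.mem_ofPred_eq, not_exists, not_or, not_le]
      at hcon hω
    have hlt : ∑ K, |((rhat ω - shat ω) - (r - s)) K| < ∑ _K : Fin 3, ε / 3 := by
      refine Finset.sum_lt_sum_of_nonempty Finset.univ_nonempty fun K _ => ?_
      have h : ((rhat ω - shat ω) - (r - s)) K = (rhat ω K - r K) - (shat ω K - s K) := by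
        simp only [PiLp.sub_apply]
        ring
      rw [h]
      linarith [abs_sub (rhat ω K - r K) (shat ω K - s K), (hcon K).1, (hcon K).2]
    have hsum : ∑ _K : Fin 3, ε / 3 = ε := by
      simp only [Finset.sum_const, Finset.card_univ, Fintype.card_fin, nsmul_eq_mul]
      ring
    linarith [EuclideanSpace.norm_le_sum_abs ((rhat ω - shat ω) - (r - s))]
  calc μ {ω | ε ≤ ‖(rhat ω - shat ω) - (r - s)‖}
      ≤ ∑ K, μ ({ω | ε / 6 ≤ |rhat ω K - r K|} ∪ {ω | ε / 6 ≤ |shat ω K - s K|}) :=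
        (measure_mono hsubset).trans (measure_iUnion_fintype_le _ _)
    _ ≤ ∑ _K : Fin 3, (ENNReal.ofReal (2 * b) + ENNReal.ofReal (2 * b)) :=
        Finset.sum_le_sum fun K _ => (measure_union_le _ _).trans (add_le_add (hr K) (hs K))
    _ = ENNReal.ofReal (12 * b) := by
        rw [← ENNReal.ofReal_add (by positivity) (by positivity), Finset.sum_const,
          ← ENNReal.ofReal_nsmul]
        congr 1
        simp only [Finset.card_univ, Fintype.card_fin, nsmul_eq_mul]
        ring

/-- Qubit two-sample universal test via Pauli tomography on both samples: accepting `H₀` iff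
`‖σ̂_m − ρ̂_n‖₁ ≤ c` with `c = √(216·ln(12/α)/k)`, `k = min{m,n}`, gives type I error at most `α`
and type II error at most `12·exp(−k·(‖ρ−σ‖₁−c)²/216)`. -/
theorem qubit_two_sample_test
    {Ω : Type*} [MeasurableSpace Ω] (μ : Measure Ω) [IsProbabilityMeasure μ]
    (σ ρ : Matrix (Fin 2) (Fin 2) ℂ)
    (hσ : σ.PosSemidef) (hσtr : σ.trace = 1)
    (hρ : ρ.PosSemidef) (hρtr : ρ.trace = 1)
    (n₁ n₂ : ℕ) (hn₁ : 1 ≤ n₁) (hn₂ : 1 ≤ n₂)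
    (m n : ℕ) (hm : m = 3 * n₁) (hn : n = 3 * n₂) (k : ℕ) (hk : k = min m n)
    (X : Fin 3 → Fin n₁ → Ω → ℝ) (Y : Fin 3 → Fin n₂ → Ω → ℝ)
    (hmeasX : ∀ K ℓ, Measurable (X K ℓ)) (hmeasY : ∀ K ℓ, Measurable (Y K ℓ))
    (hbddX : ∀ K ℓ ω, X K ℓ ω ∈ Set.Icc (-1 : ℝ) 1)
    (hbddY : ∀ K ℓ ω, Y K ℓ ω ∈ Set.Icc (-1 : ℝ) 1)
    (hmeanX : ∀ K ℓ, ∫ ω, X K ℓ ω ∂μ = ((pauli K) * σ).trace.re)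
    (hmeanY : ∀ K ℓ, ∫ ω, Y K ℓ ω ∂μ = ((pauli K) * ρ).trace.re)
    (hidentX : ∀ K ℓ ℓ', IdentDistrib (X K ℓ) (X K ℓ') μ μ)
    (hidentY : ∀ K ℓ ℓ', IdentDistrib (Y K ℓ) (Y K ℓ') μ μ)
    (hindep : iIndepFun
      (Sum.elim (fun p : Fin 3 × Fin n₁ => X p.1 p.2) (fun p : Fin 3 × Fin n₂ => Y p.1 p.2)) μ)
    (rhat shat : Fin 3 → Ω → ℝ)
    (hrhat : ∀ K ω, rhat K ω = (1 / n₁ : ℝ) * ∑ ℓ, X K ℓ ω)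
    (hshat : ∀ K ω, shat K ω = (1 / n₂ : ℝ) * ∑ ℓ, Y K ℓ ω)
    (sigmahat rhohat : Ω → Matrix (Fin 2) (Fin 2) ℂ)
    (hsig : ∀ ω, sigmahat ω = (1 / 2 : ℂ) • (1 + ∑ K, (rhat K ω : ℂ) • pauli K))
    (hrho : ∀ ω, rhohat ω = (1 / 2 : ℂ) • (1 + ∑ K, (shat K ω : ℂ) • pauli K))
    (α : ℝ) (hα : α ∈ Set.Ioo (0 : ℝ) 1)
    (c : ℝ) (hc : c = Real.sqrt (216 * Real.log (12 / α) / k)) :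
    (σ = ρ → μ {ω | traceNorm (sigmahat ω - rhohat ω) > c} ≤ ENNReal.ofReal α) ∧
    (σ ≠ ρ → c < traceNorm (ρ - σ) →
      μ {ω | traceNorm (sigmahat ω - rhohat ω) ≤ c} ≤
        ENNReal.ofReal (12 * Real.exp (-(k : ℝ) * (traceNorm (ρ - σ) - c) ^ 2 / 216))) := by
  have hk₁ : (k : ℝ) ≤ 3 * n₁ := by exact_mod_cast (by omega : k ≤ 3 * n₁)
  have hk₂ : (k : ℝ) ≤ 3 * n₂ := by exact_mod_cast (by omega : k ≤ 3 * n₂)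
  have hk0 : (0 : ℝ) < k := by exact_mod_cast (by omega : 0 < k)
  let r : EuclideanSpace ℝ (Fin 3) := WithLp.toLp 2 fun K => (pauli K * σ).trace.re
  let s : EuclideanSpace ℝ (Fin 3) := WithLp.toLp 2 fun K => (pauli K * ρ).trace.re
  let u : Ω → EuclideanSpace ℝ (Fin 3) := fun ω => WithLp.toLp 2 fun K => rhat K ω
  let v : Ω → EuclideanSpace ℝ (Fin 3) := fun ω => WithLp.toLp 2 fun K => shat K ω
  have hdiff : ∀ a b : EuclideanSpace ℝ (Fin 3),
      traceNorm ((1 / 2 : ℂ) • (1 + ∑ K, (a K : ℂ) • pauli K) -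
        (1 / 2 : ℂ) • (1 + ∑ K, (b K : ℂ) • pauli K)) = ‖a - b‖ := fun a b => by
    rw [← traceNorm_half_smul_sum_pauli, ← smul_sub, add_sub_add_left_eq_sub,
      ← Finset.sum_sub_distrib]
    simp only [← sub_smul, PiLp.sub_apply, Complex.ofReal_sub]
  have hhat : ∀ ω, traceNorm (sigmahat ω - rhohat ω) = ‖u ω - v ω‖ := fun ω => by
    rw [hsig, hrho]
    exact hdiff (u ω) (v ω)
  have htrue : traceNorm (ρ - σ) = ‖r - s‖ := by
    rw [bloch_expansion hρ.1 hρtr, bloch_expansion hσ.1 hσtr, norm_sub_rev]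
    exact hdiff s r
  have hindX : ∀ K, iIndepFun (X K) μ := fun K =>
    hindep.precomp (g := fun ℓ => Sum.inl (K, ℓ)) fun _ _ h => by simpa using h
  have hindY : ∀ K, iIndepFun (Y K) μ := fun K =>
    hindep.precomp (g := fun ℓ => Sum.inr (K, ℓ)) fun _ _ h => by simpa using h
  have hconc : ∀ ε : ℝ, 0 ≤ ε → μ {ω | ε ≤ ‖(u ω - v ω) - (r - s)‖} ≤
      ENNReal.ofReal (12 * Real.exp (-(k : ℝ) * ε ^ 2 / 216)) := by
    intro ε hε
    have hexp : ∀ N : ℝ, (k : ℝ) ≤ 3 * N →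
        Real.exp (-N * (ε / 6) ^ 2 / 2) ≤ Real.exp (-(k : ℝ) * ε ^ 2 / 216) := fun N hN => by
      refine Real.exp_le_exp.2 ?_
      nlinarith [mul_le_mul_of_nonneg_right hN (sq_nonneg ε)]
    refine measure_norm_sub_sub_ge_le (Real.exp_nonneg _) (fun K => ?_) (fun K => ?_)
    · have h := measure_abs_empirical_mean_sub_ge_le hn₁ (hmeasX K) (hbddX K) (hmeanX K) (hindX K)
        (by positivity : 0 ≤ ε / 6)
      simp only [← hrhat] at h
      refine h.trans (ENNReal.ofReal_le_ofReal ?_)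
      linarith [hexp n₁ hk₁]
    · have h := measure_abs_empirical_mean_sub_ge_le hn₂ (hmeasY K) (hbddY K) (hmeanY K) (hindY K)
        (by positivity : 0 ≤ ε / 6)
      simp only [← hshat] at h
      refine h.trans (ENNReal.ofReal_le_ofReal ?_)
      linarith [hexp n₂ hk₂]
  simp only [hhat, htrue]
  refine ⟨fun heq => ?_, fun _ hlt => ?_⟩
  · have hrs : r - s = 0 := by simp only [r, s, heq, sub_self]
    have hα12 : 1 ≤ 12 / α := by
      rw [le_div_iff₀ hα.1]
      linarith [hα.2]
    have hval : 12 * Real.exp (-(k : ℝ) * c ^ 2 / 216) = α := by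
      have hlog : -(k : ℝ) * c ^ 2 / 216 = -Real.log (12 / α) := by
        rw [hc, Real.sq_sqrt (by have := Real.log_nonneg hα12; positivity)]
        field_simp
      have hα0 := hα.1.ne'
      rw [hlog, Real.exp_neg, Real.exp_log (by linarith)]
      field_simp
    have h := hconc c (by rw [hc]; positivity)
    rw [hval, hrs] at h
    refine (measure_mono fun ω hω => ?_).trans h
    simpa using (show c < ‖u ω - v ω‖ from hω).le
  · refine (measure_mono fun ω hω => ?_).trans (hconc _ (sub_nonneg.2 hlt.le))
    have htri := norm_sub_norm_le (r - s) (u ω - v ω)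
    rw [norm_sub_rev (r - s) (u ω - v ω)] at htri
    simp only [Set.mem_ofPred_eq] at hω ⊢
    linarith
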